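/- Let M be a finitely generated inverse permutable monoid. If M has an infinite subgroup, then the language L₁ = {aⁿbⁿ : n ≥ 1} over the alphabet {a, b} belongs to 𝔏_Rat(M). -/

import Mathlib

open scoped Pointwise

/-- A semigroup/monoid `M` is `n`-permutable: for every sequence of `n` elements there is a
non-identity permutation `σ` of `{1,…,n}` leaving the product unchanged. -/
def NPermutable (M : Type) [Monoid M] (n : ℕ) : Prop :=
  ∀ s : Fin n → M, ∃ σ : Equiv.Perm (Fin n), σ ≠ 1 ∧
    (List.ofFn s).prod = (List.ofFn fun i => s (σ i)).prod

/-- `M` is permutable if it is `n`-permutable for some `n ≥ 2`. -/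
def Permutable (M : Type) [Monoid M] : Prop :=
  ∃ n : ℕ, 2 ≤ n ∧ NPermutable M n

/-- `M` is an inverse monoid: every element has a unique inverse in the sense of
inverse semigroup theory. -/
def IsInverseMonoid (M : Type) [Monoid M] : Prop :=
  ∀ m : M, ∃! m' : M, m * m' * m = m ∧ m' * m * m' = m'

/-- The rational subsets of a monoid: the closure of the finite subsets under
union, (pointwise) product and Kleene star (i.e. generated submonoid). -/
inductive IsRatSet {M : Type} [Monoid M] : Set M → Prop
  | of_finite (S : Set M) : S.Finite → IsRatSet S
  | union (S T : Set M) : IsRatSet S → IsRatSet T → IsRatSet (S ∪ T)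
  | mul (S T : Set M) : IsRatSet S → IsRatSet T → IsRatSet (S * T)
  | star (S : Set M) : IsRatSet S → IsRatSet (Submonoid.closure S : Set M)

/-- A rational monoid automaton over `M` with input alphabet `α`: a nondeterministic
finite automaton whose transitions (on letters or on `ε`, encoded by `none`) are labeled
by elements of `M`, together with rational initial and terminal sets `I0, I1 ⊆ M`. -/
structure RatMonoidAutomaton (α : Type) (M : Type) [Monoid M] where
  Q : Type
  fintypeQ : Fintype Q
  start : Q
  accept : Set Q
  step : Q → Option α → Set (Q × M)
  I0 : Set M
  I1 : Set M
  ratI0 : IsRatSet I0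
  ratI1 : IsRatSet I1

namespace RatMonoidAutomaton

variable {α M : Type} [Monoid M]

/-- `A.Reaches q w m q'` holds if there is a computation of `A` from state `q` to state `q'`
reading the word `w` (with `ε`-moves allowed) whose product of labels is `m`. -/
inductive Reaches (A : RatMonoidAutomaton α M) : A.Q → List α → M → A.Q → Prop
  | refl (q : A.Q) : Reaches A q [] 1 q
  | letter {q q' q'' : A.Q} {a : α} {w : List α} {m m' : M} :
      (q', m) ∈ A.step q (some a) → Reaches A q' w m' q'' →
      Reaches A q (a :: w) (m * m') q''
  | eps {q q' q'' : A.Q} {w : List α} {m m' : M} :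
      (q', m) ∈ A.step q none → Reaches A q' w m' q'' →
      Reaches A q w (m * m') q''

/-- The language accepted by a rational monoid automaton: `w` is accepted if some
computation on `w` from the initial state to an accepting state has label product `x`
with `x₀ * x ∈ I1` for some `x₀ ∈ I0`. -/
def lang (A : RatMonoidAutomaton α M) : Language α :=
  { w | ∃ q ∈ A.accept, ∃ m : M, A.Reaches A.start w m q ∧ ∃ x0 ∈ A.I0, x0 * m ∈ A.I1 }

end RatMonoidAutomaton

/-- `𝔏_Rat(M)`: the family of languages over the alphabet `α` accepted by rational
monoid automata over `M`. -/
def LRat (α : Type) (M : Type) [Monoid M] : Set (Language α) :=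
  { L | ∃ A : RatMonoidAutomaton α M, A.lang = L }

/-- A subsemigroup `S` of a monoid `M` is a subgroup of `M` if it is a group under the
induced operation (its identity need not be the identity of `M`). -/
def IsSubgroupOfMonoid {M : Type} [Monoid M] (S : Subsemigroup M) : Prop :=
  ∃ e ∈ S, (∀ x ∈ S, e * x = x ∧ x * e = x) ∧ ∀ x ∈ S, ∃ y ∈ S, x * y = e ∧ y * x = e

/-- A subsemigroup is finitely generated if it is the closure of a finite subset. -/
def SubsemigroupFG {M : Type} [Monoid M] (S : Subsemigroup M) : Prop :=
  ∃ T : Finset M, Subsemigroup.closure (T : Set M) = S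

/-- An element `s` is periodic if `s^i = s^j` for some `1 ≤ i < j`. -/
def IsPeriodicElem {M : Type} [Monoid M] (s : M) : Prop :=
  ∃ i j : ℕ, 1 ≤ i ∧ i < j ∧ s ^ i = s ^ j

/-- The language `L₁ = {aⁿbⁿ : n ≥ 1}` over the two-letter alphabet `Fin 2`
(where `a = 0` and `b = 1`). -/
def LangL1 : Language (Fin 2) :=
  { w | ∃ n : ℕ, 1 ≤ n ∧ w = List.replicate n 0 ++ List.replicate n 1 }

/-!
Write `y` for the inverse of `x`. If `M` is `n`-permutable, permuting the product of the elements
`yⁱxⁱ⁺¹`, `i < n`, whose value is `xⁿ`, yields `y xⁿ⁺¹ = xⁿ`; by symmetry `xⁿ` then commutes with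
its inverse, that is, `xⁿ` lies in a subgroup of `M`. If `x` is not periodic, `xⁿ` has infinite
order there and can serve as a counter recognizing `aⁿbⁿ`.

A non-periodic `x` exists by the theorem of Restivo and Reutenauer: a finitely generated permutable
periodic monoid is finite. Indeed, in an infinite finitely generated monoid there is an infinite
word all of whose factors are shortlex-minimal among the words with the same value. Such factors
are not `n`-divided if `M` is `n`-permutable, and do not include all powers of a nonempty word if
`M` is periodic, but an infinite word over a finite alphabet has factors of one of the two kinds.
-/

open Filter

/-! ### Permuted lists and divided words -/

theorem exists_lt_apply_of_ne_one {α : Type*} [LinearOrder α] [WellFoundedLT α]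
    {σ : Equiv.Perm α} (hσ : σ ≠ 1) : ∃ i, i < σ i ∧ ∀ j < i, σ j = j := by
  obtain ⟨i, hi, hmin⟩ := wellFounded_lt.has_min {i | σ i ≠ i}
    (not_forall.1 (Equiv.ext_iff.not.1 hσ))
  have hfix : ∀ j < i, σ j = j := fun j hj => not_not.1 fun h => hmin j h hj
  exact ⟨i, (lt_or_gt_of_ne hi).resolve_left fun h => hi (σ.injective (hfix _ h)), hfix⟩

theorem exists_ofFn_eq_take_append_cons {α : Type*} {n : ℕ} (s : Fin n → α)
    {σ : Equiv.Perm (Fin n)} (hσ : σ ≠ 1) :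
    ∃ i j : Fin n, i < j ∧ ∃ q r : List α,
      List.ofFn s = (List.ofFn s).take i ++ s i :: q ∧
      (List.ofFn fun k => s (σ k)) = (List.ofFn s).take i ++ s j :: r := by
  obtain ⟨i, hi, hfix⟩ := exists_lt_apply_of_ne_one hσ
  have htake : (List.ofFn s).take i = (List.ofFn fun k => s (σ k)).take i := by
    refine List.ext_getElem (by simp) fun k hk _ => ?_
    have hki : k < i := by simp only [List.length_take] at hk; omega
    simp only [List.getElem_take, List.getElem_ofFn, hfix ⟨k, _⟩ hki]
  have hsplit (t : Fin n → α) :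
      List.ofFn t = (List.ofFn t).take i ++ t i :: (List.ofFn t).drop (i + 1) := by
    conv_lhs => rw [← List.take_append_drop i (List.ofFn t)]
    rw [List.drop_eq_getElem_cons (by simp), List.getElem_ofFn]
  exact ⟨i, σ i, hi, _, _, hsplit s, htake ▸ hsplit fun k => s (σ k)⟩

theorem lex_append_of_length_eq {A : Type*} {r : A → A → Prop} {u v : List A} (h : List.Lex r u v)
    (hlen : u.length = v.length) (s t : List A) : List.Lex r (u ++ s) (v ++ t) := by
  induction h with
  | nil => simp at hlen
  | rel h => exact .rel h
  | cons _ ih => exact .cons (ih (by simpa using hlen))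

/-- A word is `n`-divided (Shirshov, Reutenauer) if it has a factorization into `n` words every
nontrivial rearrangement of which is lexicographically smaller. In an `n`-permutable monoid such a
word never is the shortlex-least one with its value. -/
def IsDivided {A : Type*} [LT A] (n : ℕ) (w : List A) : Prop :=
  ∃ x : Fin n → List A, (List.ofFn x).flatten = w ∧
    ∀ σ : Equiv.Perm (Fin n), σ ≠ 1 → (List.ofFn fun i => x (σ i)).flatten < w

theorem isDivided_flatten_of_strictAnti {A : Type*} [LinearOrder A] {n L : ℕ}
    {g : Fin n → List A} (hg : StrictAnti g) (hlen : ∀ i, (g i).length = L)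
    (r : Fin n → List A) : IsDivided n (List.ofFn fun i => g i ++ r i).flatten := by
  refine ⟨_, rfl, fun σ hσ => ?_⟩
  obtain ⟨i, j, hij, q, q', hq, hq'⟩ := exists_ofFn_eq_take_append_cons (fun i => g i ++ r i) hσ
  rw [hq, hq']
  simp only [List.flatten_append, List.flatten_cons, List.append_assoc]
  exact List.append_left_lt (lex_append_of_length_eq (hg hij) ((hlen j).trans (hlen i).symm) _ _)

/-! ### Factors of infinite words -/

section InfiniteWords

variable {A : Type*}

/-- The word `u` is a factor of the infinite word `w` at position `i`, counted from `0`. The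
position is kept so that recurring factors can be chosen disjoint. -/
def OccursAt (u : List A) (w : Stream' A) (i : ℕ) : Prop :=
  (w.drop i).take u.length = u

theorem OccursAt.append {u v : List A} {w : Stream' A} {i : ℕ} (hu : OccursAt u w i)
    (hv : OccursAt v w (i + u.length)) : OccursAt (u ++ v) w i := by
  unfold OccursAt at *
  rw [List.length_append, Stream'.take_add, hu, Stream'.drop_drop, hv]

theorem occursAt_take_drop (w : Stream' A) (i l : ℕ) : OccursAt ((w.drop i).take l) w i := by
  rw [OccursAt, Stream'.length_take]

theorem occursAt_congr_of_take_eq {u : List A} {w z : Stream' A} {i : ℕ}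
    (h : w.take (i + u.length) = z.take (i + u.length)) : OccursAt u w i ↔ OccursAt u z i := by
  simp only [Stream'.take_add] at h
  rw [OccursAt, OccursAt, (List.append_inj h (by simp)).2]

theorem OccursAt.isInfix_take {u : List A} {w : Stream' A} {i : ℕ} (h : OccursAt u w i) :
    u <:+: w.take (i + u.length) := by
  rw [Stream'.take_add, h]
  exact (List.suffix_append _ _).isInfix

theorem exists_forall_frequently_take_eq [Finite A] (u : ℕ → Stream' A) :
    ∃ z : Stream' A, ∀ L, ∃ᶠ i in atTop, (u i).take L = z.take L := by
  have hlim (j : ℕ) : ∃ a, ∀ᶠ i in hyperfilter ℕ, (u i).get j = a := by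
    obtain ⟨a, ha⟩ := ((hyperfilter ℕ).map fun i => (u i).get j).eq_pure_of_finite
    have hpure : ∀ᶠ b in ((hyperfilter ℕ).map fun i => (u i).get j), b = a := by rw [ha]; rfl
    exact ⟨a, hpure⟩
  obtain ⟨z, hz⟩ : ∃ z : Stream' A, ∀ j, ∀ᶠ i in hyperfilter ℕ, (u i).get j = z.get j :=
    Classical.skolem.1 hlim
  refine ⟨z, fun L => Frequently.filter_mono (Eventually.frequently ?_) Nat.hyperfilter_le_atTop⟩
  induction L with
  | zero => exact .of_forall fun _ => rfl
  | succ L ih =>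
    filter_upwards [ih, hz L] with i hi hL
    rw [Stream'.take_succ', Stream'.take_succ', hi, hL]

theorem exists_stream_forall_occursAt [Finite A] {P : List A → Prop}
    (hP : ∀ u v, u <:+: v → P v → P u) (hlong : ∀ N, ∃ v, P v ∧ N ≤ v.length) :
    ∃ w : Stream' A, ∀ u i, OccursAt u w i → P u := by
  choose v hPv hlen using hlong
  let a : A := (v 1)[0]'(hlen 1)
  obtain ⟨w, hw⟩ := exists_forall_frequently_take_eq fun N => v N ++ₛ Stream'.const a
  -- Kőnig's lemma: `w` is a cluster point, so each of its prefixes begins some long `v N`.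
  refine ⟨w, fun u i hu => ?_⟩
  obtain ⟨N, htake, hN⟩ := ((hw (i + u.length)).and_eventually
    (eventually_ge_atTop (i + u.length))).exists
  refine hP u (v N) (hu.isInfix_take.trans ?_) (hPv N)
  rw [← htake, Stream'.take_append_of_le_length _ _ _ (hN.trans (hlen N))]
  exact (List.take_prefix _ _).isInfix

theorem exists_limit_stream [Finite A] (w : Stream' A) :
    ∃ z : Stream' A, ∀ u k, OccursAt u z k → ∃ᶠ i in atTop, OccursAt u w i := by
  obtain ⟨z, hz⟩ := exists_forall_frequently_take_eq fun i => w.drop i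
  refine ⟨z, fun u k hu => ?_⟩
  have hshift : ∃ᶠ i in atTop, OccursAt u w (i + k) :=
    (hz (k + u.length)).mono fun i hi => by
      have := (occursAt_congr_of_take_eq hi).2 hu
      rwa [OccursAt, Stream'.drop_drop] at this
  exact (tendsto_add_atTop_nat k).frequently hshift

theorem occursAt_flatten_replicate {w : Stream' A} {i d : ℕ} (h : w.drop (i + d) = w.drop i)
    (k : ℕ) : OccursAt (List.replicate k ((w.drop i).take d)).flatten w i := by
  have htake (k : ℕ) :
      (w.drop i).take (k * d) = (List.replicate k ((w.drop i).take d)).flatten := by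
    induction k with
    | zero => simp
    | succ k ih =>
      rw [Nat.succ_mul, add_comm, Stream'.take_add, Stream'.drop_drop, h, ih, List.replicate_succ,
        List.flatten_cons]
  rw [← htake]
  exact occursAt_take_drop w i _

theorem exists_injective_take {ι : Type*} [Finite ι] {s : ι → Stream' A}
    (hs : Function.Injective s) : ∃ L, Function.Injective fun i => (s i).take L := by
  have hsep (i j : ι) : ∀ᶠ L in atTop, (s i).take L = (s j).take L → i = j := by
    by_cases hij : i = j
    · exact .of_forall fun _ _ => hij
    · obtain ⟨L₀, hL₀⟩ : ∃ L, (s i).take L ≠ (s j).take L := by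
        by_contra! h
        exact hij (hs (Stream'.take_theorem _ _ h))
      filter_upwards [eventually_ge_atTop L₀] with L hL h
      have := congrArg (List.take L₀) h
      rw [Stream'.take_take, Stream'.take_take, min_eq_right hL] at this
      exact absurd this hL₀
  obtain ⟨L, hL⟩ := (eventually_all.2 fun i => eventually_all.2 (hsep i)).exists
  exact ⟨L, fun i j => hL i j⟩

theorem exists_occursAt_flatten_append {w : Stream' A} {n : ℕ} {g : Fin n → List A}
    (hg : ∀ k, ∃ᶠ i in atTop, OccursAt (g k) w i) :
    ∃ r : Fin n → List A, ∃ i, OccursAt (List.ofFn fun k => g k ++ r k).flatten w i := by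
  suffices h : ∀ N, ∃ r : Fin n → List A, ∃ i ≥ N,
      OccursAt (List.ofFn fun k => g k ++ r k).flatten w i by
    obtain ⟨r, i, -, hi⟩ := h 0
    exact ⟨r, i, hi⟩
  induction n with
  | zero => exact fun N => ⟨g, N, le_rfl, by simp [OccursAt]⟩
  | succ n ih =>
    intro N
    obtain ⟨i, hN, hi⟩ := frequently_atTop.1 (hg 0) N
    obtain ⟨r, j, hj, hr⟩ := ih (fun k => hg k.succ) (i + (g 0).length)
    obtain ⟨d, rfl⟩ := Nat.exists_eq_add_of_le hj
    refine ⟨Fin.cons ((w.drop (i + (g 0).length)).take d) r, i, hN, ?_⟩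
    simp only [List.ofFn_succ, List.flatten_cons, Fin.cons_zero, Fin.cons_succ]
    refine (hi.append (occursAt_take_drop w _ d)).append ?_
    simpa only [List.length_append, Stream'.length_take, ← add_assoc] using hr

theorem exists_occursAt_isDivided_of_injective [LinearOrder A] {w : Stream' A} {n L : ℕ}
    {g : Fin n → List A} (hinj : Function.Injective g) (hlen : ∀ k, (g k).length = L)
    (hg : ∀ k, ∃ᶠ i in atTop, OccursAt (g k) w i) :
    ∃ v, IsDivided n v ∧ ∃ i, OccursAt v w i := by
  have hsort : StrictAnti ((g ∘ Tuple.sort g) ∘ Fin.rev) :=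
    ((Tuple.monotone_sort g).strictMono_of_injective
      (hinj.comp (Tuple.sort g).injective)).comp_strictAnti Fin.rev_strictAnti
  obtain ⟨r, hr⟩ := exists_occursAt_flatten_append (g := (g ∘ Tuple.sort g) ∘ Fin.rev)
    fun k => hg _
  exact ⟨_, isDivided_flatten_of_strictAnti hsort (fun k => hlen _) r, hr⟩

theorem exists_powers_occursAt_or_exists_isDivided [LinearOrder A] [Finite A] (w : Stream' A) :
    (∃ u ≠ [], ∀ k, ∃ i, OccursAt (List.replicate k u).flatten w i) ∨
      ∀ n, ∃ v, IsDivided n v ∧ ∃ i, OccursAt v w i := by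
  obtain ⟨z, hz⟩ := exists_limit_stream w
  by_cases hinj : Function.Injective fun k => z.drop k
  · refine .inr fun n => ?_
    obtain ⟨L, hL⟩ := exists_injective_take (hinj.comp (Fin.val_injective (n := n)))
    exact exists_occursAt_isDivided_of_injective hL (fun k => Stream'.length_take _ _)
      fun k => hz _ _ (occursAt_take_drop z k L)
  · obtain ⟨i, d, hd, hper⟩ : ∃ i d, d ≠ 0 ∧ z.drop (i + d) = z.drop i := by
      simp only [Function.Injective, not_forall] at hinj
      obtain ⟨i, j, heq, hij⟩ := hinj
      rcases lt_or_gt_of_ne hij with h | h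
      · exact ⟨i, j - i, by omega, by rw [Nat.add_sub_cancel' h.le, heq]⟩
      · exact ⟨j, i - j, by omega, by rw [Nat.add_sub_cancel' h.le, heq]⟩
    refine .inl ⟨(z.drop i).take d, ?_, fun k =>
      (hz _ _ (occursAt_flatten_replicate hper k)).exists⟩
    simpa [← List.length_eq_zero_iff] using hd

end InfiniteWords

/-! ### Reduced words and the Burnside property -/

section ReducedWord

variable {A M : Type*} [Monoid M]

/-- A word over `A` is reduced if it is shortlex-minimal among the words with the same value in
`M`, the letters being evaluated by `f`. In contrast to shortest words, no two reduced words have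
the same value when `A` is linearly ordered. -/
def IsReducedWord [LT A] (f : A → M) (w : List A) : Prop :=
  ∀ v : List A, (v.map f).prod = (w.map f).prod → ¬ List.Shortlex (· < ·) v w

variable {f : A → M}

theorem exists_isReducedWord_prod_eq [LT A] [WellFoundedLT A] (f : A → M) (w : List A) :
    ∃ v, (v.map f).prod = (w.map f).prod ∧ IsReducedWord f v := by
  obtain ⟨v, hv, hmin⟩ := (List.Shortlex.wf (r := ((· < ·) : A → A → Prop)) wellFounded_lt).has_min
    {v | (v.map f).prod = (w.map f).prod} ⟨w, rfl⟩
  exact ⟨v, hv, fun u hu => hmin u (hu.trans hv)⟩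

theorem IsReducedWord.of_isInfix [LT A] {u w : List A} (hw : IsReducedWord f w) (hu : u <:+: w) :
    IsReducedWord f u := by
  obtain ⟨p, s, rfl⟩ := hu
  intro v hv hlt
  refine hw (p ++ v ++ s) (by simp only [List.map_append, List.prod_append, hv]) ?_
  rw [List.append_assoc, List.append_assoc]
  refine List.Shortlex.append_left ?_ p
  rcases List.shortlex_def.1 hlt with hlen | ⟨hlen, hlex⟩
  · exact .of_length_lt (by simpa using hlen)
  · exact .of_lex (by simpa using hlen) (lex_append_of_length_eq hlex hlen s s)

theorem exists_isReducedWord_le_length [Finite A] [LT A] [WellFoundedLT A] [Infinite M]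
    (hf : ∀ m, ∃ w : List A, (w.map f).prod = m) (N : ℕ) :
    ∃ v, IsReducedWord f v ∧ N ≤ v.length := by
  by_contra! hshort
  have hfin : ((fun v : List A => (v.map f).prod) '' {v | v.length < N}).Finite :=
    (List.finite_length_lt A N).image _
  refine Set.infinite_univ (α := M) (hfin.subset fun m _ => ?_)
  obtain ⟨w, rfl⟩ := hf m
  obtain ⟨v, hv, hred⟩ := exists_isReducedWord_prod_eq f w
  exact ⟨v, hshort v hred, hv⟩

theorem exists_finite_alphabet_of_fg (hfg : Monoid.FG M) :
    ∃ (A : Type) (_ : Finite A) (f : A → M), ∀ m, ∃ w : List A, (w.map f).prod = m := by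
  obtain ⟨A, hA, φ, hφ⟩ := Monoid.fg_iff_exists_freeGroup_hom_surjective_finite.1 hfg
  refine ⟨A, hA, φ ∘ FreeMonoid.of, fun m => ?_⟩
  obtain ⟨w, rfl⟩ := hφ m
  exact ⟨w.toList, by rw [← FreeMonoid.lift_apply, FreeMonoid.lift_restrict]⟩

end ReducedWord

section Burnside

variable {A : Type*} {M : Type} [Monoid M] {f : A → M}

theorem IsReducedWord.not_isDivided [LT A] {w : List A} (hw : IsReducedWord f w) {n : ℕ}
    (hn : NPermutable M n) : ¬ IsDivided n w := by
  rintro ⟨x, rfl, hlt⟩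
  obtain ⟨σ, hσ, hprod⟩ := hn fun i => ((x i).map f).prod
  refine hw _ ?_ (.of_lex ?_ (hlt σ hσ))
  · simpa only [List.map_flatten, List.prod_flatten, List.map_ofFn, Function.comp_def] using
      hprod.symm
  · simpa only [List.length_flatten, List.map_ofFn, List.sum_ofFn, Function.comp_def] using
      Equiv.sum_comp σ fun i => (x i).length

theorem exists_not_isReducedWord_flatten_replicate [LT A] {u : List A} (hu : u ≠ [])
    (hper : IsPeriodicElem (u.map f).prod) :
    ∃ k, ¬ IsReducedWord f (List.replicate k u).flatten := by
  obtain ⟨i, j, -, hij, hpow⟩ := hper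
  refine ⟨j, fun hred => hred (List.replicate i u).flatten ?_ (.of_length_lt ?_)⟩
  · simpa [List.map_flatten, List.prod_flatten] using hpow
  · simpa [List.length_flatten] using
      Nat.mul_lt_mul_of_pos_right hij (List.length_pos_iff.2 hu)

theorem finite_of_fg_of_permutable_of_periodic (hfg : Monoid.FG M) (hperm : Permutable M)
    (hper : ∀ x : M, IsPeriodicElem x) : Finite M := by
  by_contra hinf
  rw [not_finite_iff_infinite] at hinf
  obtain ⟨n, -, hn⟩ := hperm
  obtain ⟨A, _, f, hf⟩ := exists_finite_alphabet_of_fg hfg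
  obtain ⟨_, _⟩ := exists_wellFoundedLT A
  obtain ⟨w, hw⟩ := exists_stream_forall_occursAt (P := IsReducedWord f)
    (fun _ _ huv hv => hv.of_isInfix huv) (exists_isReducedWord_le_length hf)
  rcases exists_powers_occursAt_or_exists_isDivided w with ⟨u, hu, hpow⟩ | hdiv
  · obtain ⟨k, hk⟩ := exists_not_isReducedWord_flatten_replicate hu (hper (u.map f).prod)
    obtain ⟨i, hi⟩ := hpow k
    exact hk (hw _ i hi)
  · obtain ⟨v, hv, i, hi⟩ := hdiv n
    exact (hw v i hi).not_isDivided hn hv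

end Burnside

/-! ### Inverse monoids -/

section InverseMonoid

/-- `x` and `y` are inverses of each other in the sense of semigroup theory. Naming the relation
makes it available for idempotents and powers, apart from the uniqueness in `IsInverseMonoid`. -/
def IsGeneralizedInverse {S : Type*} [Mul S] (x y : S) : Prop :=
  x * y * x = x ∧ y * x * y = y

namespace IsGeneralizedInverse

variable {S : Type*}

theorem symm [Mul S] {x y : S} (h : IsGeneralizedInverse x y) : IsGeneralizedInverse y x :=
  ⟨h.2, h.1⟩

theorem isIdempotentElem_mul [Semigroup S] {x y : S} (h : IsGeneralizedInverse x y) :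
    IsIdempotentElem (x * y) := by
  rw [IsIdempotentElem, ← mul_assoc, h.1]

end IsGeneralizedInverse

theorem isGeneralizedInverse_self_of_isIdempotentElem {S : Type*} [Mul S] {e : S}
    (he : IsIdempotentElem e) :
    IsGeneralizedInverse e e :=
  ⟨by rw [he.eq, he.eq], by rw [he.eq, he.eq]⟩

variable {M : Type} [Monoid M]

namespace IsInverseMonoid

theorem isIdempotentElem_mul (hinv : IsInverseMonoid M) {e f : M} (he : IsIdempotentElem e)
    (hf : IsIdempotentElem f) : IsIdempotentElem (e * f) := by
  obtain ⟨z, hz, huniq⟩ := hinv (e * f)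
  have hfze : f * z * e = z := by
    refine huniq _ ⟨?_, ?_⟩
    · calc e * f * (f * z * e) * (e * f) = e * (f * f) * z * (e * e) * f := by
            simp only [mul_assoc]
        _ = e * f * z * (e * f) := by rw [he.eq, hf.eq]; simp only [mul_assoc]
        _ = e * f := hz.1
    · calc f * z * e * (e * f) * (f * z * e) = f * (z * ((e * e) * (f * f)) * z) * e := by
            simp only [mul_assoc]
        _ = f * z * e := by rw [he.eq, hf.eq, hz.2]
  have hzidem : IsIdempotentElem z := by
    calc z * z = (f * z * e) * (f * z * e) := by rw [hfze]
      _ = f * (z * (e * f) * z) * e := by simp only [mul_assoc]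
      _ = z := by rw [hz.2, hfze]
  have hzef : z = e * f :=
    (hinv z).unique (isGeneralizedInverse_self_of_isIdempotentElem hzidem)
      (IsGeneralizedInverse.symm hz)
  rwa [← hzef]

theorem commute_of_isIdempotentElem (hinv : IsInverseMonoid M) {e f : M}
    (he : IsIdempotentElem e) (hf : IsIdempotentElem f) : Commute e f := by
  have hswap {a b : M} (ha : IsIdempotentElem a) (hb : IsIdempotentElem b) :
      a * b * (b * a) * (a * b) = a * b := by
    calc a * b * (b * a) * (a * b) = a * (b * b) * (a * a) * b := by simp only [mul_assoc]
      _ = (a * b) * (a * b) := by rw [ha.eq, hb.eq]; simp only [mul_assoc]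
      _ = a * b := hinv.isIdempotentElem_mul ha hb
  exact (hinv (e * f)).unique
    (isGeneralizedInverse_self_of_isIdempotentElem (hinv.isIdempotentElem_mul he hf))
    ⟨hswap he hf, hswap hf he⟩

end IsInverseMonoid

namespace IsGeneralizedInverse

variable {x y : M}

theorem pow (h : IsGeneralizedInverse x y) (hinv : IsInverseMonoid M) (k : ℕ) :
    IsGeneralizedInverse (x ^ k) (y ^ k) := by
  induction k with
  | zero => simp [IsGeneralizedInverse]
  | succ k ih =>
    have hcomm : (x * y) * (y ^ k * x ^ k) = (y ^ k * x ^ k) * (x * y) :=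
      hinv.commute_of_isIdempotentElem h.isIdempotentElem_mul ih.symm.isIdempotentElem_mul
    constructor
    · calc x ^ (k + 1) * y ^ (k + 1) * x ^ (k + 1)
          = x ^ k * ((x * y) * (y ^ k * x ^ k)) * x := by
            simp only [pow_succ x, pow_succ' y, mul_assoc]
        _ = (x ^ k * y ^ k * x ^ k) * (x * y * x) := by rw [hcomm]; simp only [mul_assoc]
        _ = x ^ (k + 1) := by rw [ih.1, h.1, pow_succ]
    · calc y ^ (k + 1) * x ^ (k + 1) * y ^ (k + 1)
          = y * ((y ^ k * x ^ k) * (x * y)) * y ^ k := by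
            simp only [pow_succ x, pow_succ' y, mul_assoc]
        _ = (y * x * y) * (y ^ k * x ^ k * y ^ k) := by rw [← hcomm]; simp only [mul_assoc]
        _ = y ^ (k + 1) := by rw [ih.2, h.2, pow_succ']

theorem pow_mul_pow_add_mul_pow_add (h : IsGeneralizedInverse x y) (hinv : IsInverseMonoid M)
    (i m : ℕ) : x ^ i * (y ^ (i + m) * x ^ (i + m)) = y ^ m * x ^ m * x ^ i := by
  have hcomm : (x ^ i * y ^ i) * (y ^ m * x ^ m) = (y ^ m * x ^ m) * (x ^ i * y ^ i) :=
    hinv.commute_of_isIdempotentElem (h.pow hinv i).isIdempotentElem_mul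
      (h.pow hinv m).symm.isIdempotentElem_mul
  calc x ^ i * (y ^ (i + m) * x ^ (i + m)) = (x ^ i * y ^ i) * (y ^ m * x ^ m) * x ^ i := by
        rw [pow_add y, add_comm i m, pow_add x]; simp only [mul_assoc]
    _ = y ^ m * x ^ m * (x ^ i * y ^ i * x ^ i) := by rw [hcomm]; simp only [mul_assoc]
    _ = y ^ m * x ^ m * x ^ i := by rw [(h.pow hinv i).1]

theorem mul_mul_pow_mul_pow_mul_pow (h : IsGeneralizedInverse x y) (hinv : IsInverseMonoid M)
    {i j : ℕ} (hij : i < j) :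
    y * x * (x ^ i * (y ^ j * x ^ j)) = x ^ i * (y ^ j * x ^ j) := by
  obtain ⟨m, rfl⟩ := Nat.exists_eq_add_of_lt hij
  rw [add_assoc, h.pow_mul_pow_add_mul_pow_add hinv, pow_succ' y]
  simp only [← mul_assoc, h.2]

theorem prod_take_ofFn_pow_mul_pow_succ (h : IsGeneralizedInverse x y)
    (hinv : IsInverseMonoid M) {n k : ℕ} (hk : k ≤ n) :
    ((List.ofFn fun i : Fin n => y ^ (i : ℕ) * x ^ ((i : ℕ) + 1)).take k).prod = x ^ k := by
  induction k with
  | zero => simp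
  | succ k ih =>
    rw [List.prod_take_succ _ _ (by simpa using hk), ih (by omega), List.getElem_ofFn, pow_succ,
      ← mul_assoc, ← mul_assoc, (h.pow hinv k).1]

theorem mul_pow_succ_of_nPermutable (h : IsGeneralizedInverse x y) (hinv : IsInverseMonoid M)
    {n : ℕ} (hn : NPermutable M n) : y * x ^ (n + 1) = x ^ n := by
  let s (i : Fin n) : M := y ^ (i : ℕ) * x ^ ((i : ℕ) + 1)
  obtain ⟨σ, hσ, hprod⟩ := hn s
  obtain ⟨i, j, hij, -, r, -, hr⟩ := exists_ofFn_eq_take_append_cons s hσ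
  have hs : (List.ofFn s).prod = x ^ n := by
    simpa [List.take_of_length_le] using h.prod_take_ofFn_pow_mul_pow_succ hinv (le_refl n)
  have hxn : x ^ n = x ^ (i : ℕ) * (y ^ (j : ℕ) * x ^ (j : ℕ)) * (x * r.prod) := by
    rw [← hs, hprod, hr, List.prod_append, List.prod_cons,
      h.prod_take_ofFn_pow_mul_pow_succ hinv i.2.le]
    simp only [s, pow_succ, mul_assoc]
  rw [pow_succ', ← mul_assoc, hxn, ← mul_assoc (y * x), h.mul_mul_pow_mul_pow_mul_pow hinv hij]

theorem pow_mul_pow_add_of_nPermutable (h : IsGeneralizedInverse x y) (hinv : IsInverseMonoid M)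
    {n : ℕ} (hn : NPermutable M n) (k : ℕ) : y ^ k * x ^ (n + k) = x ^ n := by
  induction k with
  | zero => simp
  | succ k ih =>
    calc y ^ (k + 1) * x ^ (n + (k + 1)) = y ^ k * (y * x ^ (n + 1)) * x ^ k := by
          rw [← add_assoc, add_right_comm, pow_add x, pow_succ y]; simp only [mul_assoc]
      _ = x ^ n := by rw [h.mul_pow_succ_of_nPermutable hinv hn, mul_assoc, ← pow_add, ih]

theorem commute_pow_of_nPermutable (h : IsGeneralizedInverse x y) (hinv : IsInverseMonoid M)
    {n : ℕ} (hn : NPermutable M n) : Commute (x ^ n) (y ^ n) := by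
  have hx : (y ^ n * x ^ n) * (x ^ n * y ^ n) = x ^ n * y ^ n := by
    rw [← mul_assoc, mul_assoc (y ^ n), ← pow_add, h.pow_mul_pow_add_of_nPermutable hinv hn]
  have hy : (x ^ n * y ^ n) * (y ^ n * x ^ n) = y ^ n * x ^ n := by
    rw [← mul_assoc, mul_assoc (x ^ n), ← pow_add, h.symm.pow_mul_pow_add_of_nPermutable hinv hn]
  have hcomm : (y ^ n * x ^ n) * (x ^ n * y ^ n) = (x ^ n * y ^ n) * (y ^ n * x ^ n) :=
    hinv.commute_of_isIdempotentElem (h.pow hinv n).symm.isIdempotentElem_mul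
      (h.pow hinv n).isIdempotentElem_mul
  rw [Commute, SemiconjBy, ← hx, hcomm, hy]

end IsGeneralizedInverse

end InverseMonoid

/-! ### The counter automaton -/

section Counter

variable {M : Type} [Monoid M]

theorem IsPeriodicElem.of_pow {x : M} {n : ℕ} (hn : n ≠ 0) (h : IsPeriodicElem (x ^ n)) :
    IsPeriodicElem x := by
  obtain ⟨i, j, hi, hij, hpow⟩ := h
  rw [← pow_mul, ← pow_mul] at hpow
  exact ⟨n * i, n * j, Nat.mul_pos (Nat.pos_of_ne_zero hn) hi,
    Nat.mul_lt_mul_of_pos_left hij (Nat.pos_of_ne_zero hn), hpow⟩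

theorem pow_succ_injective_of_not_isPeriodicElem {x : M} (hx : ¬ IsPeriodicElem x) :
    Function.Injective fun k : ℕ => x ^ (k + 1) := by
  intro i j hij
  by_contra hne
  rcases lt_or_gt_of_ne hne with h | h
  · exact hx ⟨i + 1, j + 1, by omega, by omega, hij⟩
  · exact hx ⟨j + 1, i + 1, by omega, by omega, hij.symm⟩

theorem pow_mul_pow_succ_eq_mul_iff {g h : M} (hgh : IsGeneralizedInverse g h)
    (hcomm : Commute g h) (hg : ¬ IsPeriodicElem g) {n k : ℕ} :
    g ^ n * h ^ (k + 1) = g * h ↔ n = k + 1 := by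
  have hpow (j : ℕ) : g ^ (j + 1) * h ^ (j + 1) = g * h := by
    rw [← hcomm.mul_pow, hgh.isIdempotentElem_mul.pow_succ_eq]
  have hleft (j : ℕ) : g * h * g ^ (j + 1) = g ^ (j + 1) := by
    rw [pow_succ', ← mul_assoc, hgh.1]
  refine ⟨fun heq => pow_succ_injective_of_not_isPeriodicElem hg ?_, fun hn => hn ▸ hpow k⟩
  have hright : g ^ (n + 1) = g ^ n * (g * h) * g := by rw [mul_assoc, hgh.1, pow_succ]
  calc g ^ (n + 1) = g ^ n * h ^ (k + 1) * g ^ (k + 1) * g := by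
        rw [hright, ← hpow k, (hcomm.pow_pow _ _).eq, ← mul_assoc]
    _ = g ^ (k + 1 + 1) := by rw [heq, hleft, pow_succ g (k + 1)]

/-- The automaton recognizing `aⁿbⁿ` with a counter in `M`: reading `a` in the state `false`
multiplies the counter by `g`, reading `b` multiplies it by `h` and leads to the state `true`. -/
def counterAutomaton (g h : M) : RatMonoidAutomaton (Fin 2) M where
  Q := Bool
  fintypeQ := inferInstance
  start := false
  accept := {true}
  step
    | false, some 0 => {(false, g)}
    | true, some 0 => ∅
    | _, some 1 => {(true, h)}
    | _, none => ∅
  I0 := {1}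
  I1 := {g * h}
  ratI0 := .of_finite _ (Set.finite_singleton _)
  ratI1 := .of_finite _ (Set.finite_singleton _)

theorem counterAutomaton_reaches_true_iff {g h : M} {w : List (Fin 2)} {m : M}
    {q : (counterAutomaton g h).Q} :
    (counterAutomaton g h).Reaches true w m q ↔
      q = true ∧ ∃ k, w = List.replicate k 1 ∧ m = h ^ k := by
  constructor
  · intro hw
    obtain ⟨p, hp⟩ : ∃ p : (counterAutomaton g h).Q, true = p := ⟨_, rfl⟩
    rw [hp] at hw
    induction hw with
    | refl => exact ⟨hp.symm, 0, rfl, (pow_zero h).symm⟩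
    | @letter _ _ _ a _ _ _ hstep _ ih =>
      subst hp
      fin_cases a
      · exact hstep.elim
      · obtain ⟨rfl, rfl⟩ := Prod.mk.inj hstep
        obtain ⟨hq, k, rfl, rfl⟩ := ih rfl
        exact ⟨hq, k + 1, rfl, (pow_succ' _ k).symm⟩
    | eps hstep =>
      subst hp
      exact hstep.elim
  · rintro ⟨rfl, k, rfl, rfl⟩
    induction k with
    | zero => exact pow_zero h ▸ .refl _
    | succ k ih => exact pow_succ' h k ▸ .letter (Set.mem_singleton _) ih

theorem counterAutomaton_reaches_false_true_iff {g h : M} {w : List (Fin 2)} {m : M} :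
    (counterAutomaton g h).Reaches false w m true ↔
      ∃ n k, w = List.replicate n 0 ++ List.replicate (k + 1) 1 ∧ m = g ^ n * h ^ (k + 1) := by
  constructor
  · intro hw
    obtain ⟨p, hp⟩ : ∃ p : (counterAutomaton g h).Q, false = p := ⟨_, rfl⟩
    obtain ⟨q, hq⟩ : ∃ q : (counterAutomaton g h).Q, true = q := ⟨_, rfl⟩
    rw [hp, hq] at hw
    induction hw with
    | refl => exact absurd (hp.trans hq.symm) Bool.false_ne_true
    | @letter _ _ _ a _ _ _ hstep hrest ih =>
      subst hp
      fin_cases a <;> obtain ⟨rfl, rfl⟩ := Prod.mk.inj hstep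
      · obtain ⟨n, k, rfl, rfl⟩ := ih rfl hq
        exact ⟨n + 1, k, rfl, by rw [pow_succ' _ n, mul_assoc]⟩
      · obtain ⟨-, k, rfl, rfl⟩ := counterAutomaton_reaches_true_iff.1 hrest
        exact ⟨0, k, rfl, by rw [pow_zero, one_mul, pow_succ']⟩
    | eps hstep =>
      subst hp
      exact hstep.elim
  · rintro ⟨n, k, rfl, rfl⟩
    induction n with
    | zero =>
      rw [pow_zero, one_mul, pow_succ']
      exact .letter (Set.mem_singleton _) (counterAutomaton_reaches_true_iff.2 ⟨rfl, k, rfl, rfl⟩)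
    | succ n ih =>
      rw [pow_succ', mul_assoc]
      exact .letter (Set.mem_singleton _) ih

theorem mem_counterAutomaton_lang_iff {g h : M} {w : List (Fin 2)} :
    w ∈ (counterAutomaton g h).lang ↔ (counterAutomaton g h).Reaches false w (g * h) true := by
  constructor
  · rintro ⟨_, rfl, m, hm, _, rfl, hmul⟩
    rwa [← one_mul m, hmul] at hm
  · exact fun hw => ⟨true, rfl, _, hw, 1, rfl, one_mul _⟩

theorem LangL1_mem_LRat_of_not_isPeriodicElem {g h : M} (hgh : IsGeneralizedInverse g h)
    (hcomm : Commute g h) (hg : ¬ IsPeriodicElem g) : LangL1 ∈ LRat (Fin 2) M := by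
  refine ⟨counterAutomaton g h, Language.ext fun w => ?_⟩
  rw [mem_counterAutomaton_lang_iff, counterAutomaton_reaches_false_true_iff]
  constructor
  · rintro ⟨n, k, rfl, hm⟩
    obtain rfl := (pow_mul_pow_succ_eq_mul_iff hgh hcomm hg).1 hm.symm
    exact ⟨k + 1, by omega, rfl⟩
  · rintro ⟨n, hn, rfl⟩
    obtain ⟨k, rfl⟩ := Nat.exists_eq_add_of_le' hn
    exact ⟨k + 1, k, rfl, ((pow_mul_pow_succ_eq_mul_iff hgh hcomm hg).2 rfl).symm⟩

end Counter

theorem L1_mem_LRat_of_infinite_subgroup_general (M : Type) [Monoid M] [Infinite M]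
    (hfg : Monoid.FG M) (hinv : IsInverseMonoid M) (hperm : Permutable M) :
    LangL1 ∈ LRat (Fin 2) M := by
  obtain ⟨x, hx⟩ : ∃ x : M, ¬ IsPeriodicElem x := by
    by_contra! hper
    exact not_finite_iff_infinite.2 ‹_› (finite_of_fg_of_permutable_of_periodic hfg hperm hper)
  obtain ⟨n, hn2, hn⟩ := hperm
  obtain ⟨y, hxy : IsGeneralizedInverse x y, -⟩ := hinv x
  exact LangL1_mem_LRat_of_not_isPeriodicElem (hxy.pow hinv n)
    (hxy.commute_pow_of_nPermutable hinv hn) fun h => hx (h.of_pow (by omega))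

/-- Let `M` be a finitely generated inverse permutable monoid. If `M` has
an infinite subgroup, then `L₁ = {aⁿbⁿ : n ≥ 1}` belongs to `𝔏_Rat(M)`. -/
theorem L1_mem_LRat_of_infinite_subgroup
    (M : Type) [Monoid M] (hfg : Monoid.FG M) (hinv : IsInverseMonoid M)
    (hperm : Permutable M)
    (hinf : ∃ S : Subsemigroup M, IsSubgroupOfMonoid S ∧ (S : Set M).Infinite) :
    LangL1 ∈ LRat (Fin 2) M := by
  obtain ⟨S, -, hS⟩ := hinf
  have : Infinite M := Set.infinite_univ_iff.1 (hS.mono (Set.subset_univ _))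
  exact L1_mem_LRat_of_infinite_subgroup_general M hfg hinv hperm
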